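/- arXiv:1407.4416 — 11 statements merged into one kernel-verified Lean document; each statement's English description precedes it below -/
import Mathlib

section
/- For any two nonempty finite sets W1, W2, the resemblance R = |W1 ∩ W2| / |W1 ∪ W2| is bounded above by S/(2 − S), where S = |W1 ∩ W2| / √(|W1|·|W2|) is the cosine similarity; that is, R ≤ S/(2 − S). -/
/-!
Write `a = |W1 ∩ W2|` and `q = √(|W1|·|W2|)`. Then `S / (2 - S) = a / (2q - a)`, while
`R = a / (|W1| + |W2| - a)`, so the claim reduces to the AM-GM inequality `2q ≤ |W1| + |W2|`.
The denominator `2q - a` is positive because `a ≤ min |W1| |W2| ≤ q`.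
-/

/-- Upper bound: for nonempty finite sets `W1, W2`, the resemblance
`R = |W1 ∩ W2| / |W1 ∪ W2|` is at most `S / (2 - S)`, where
`S = |W1 ∩ W2| / √(|W1|·|W2|)` is the cosine similarity. -/
theorem minhash_upper_bound (W1 W2 : Finset ℕ) (h1 : W1.Nonempty) (h2 : W2.Nonempty) :
    ((W1 ∩ W2).card : ℝ) / ((W1 ∪ W2).card : ℝ) ≤
      (((W1 ∩ W2).card : ℝ) / Real.sqrt ((W1.card : ℝ) * (W2.card : ℝ))) /
        (2 - ((W1 ∩ W2).card : ℝ) / Real.sqrt ((W1.card : ℝ) * (W2.card : ℝ))) := by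
  have hf1 : (0 : ℝ) < W1.card := by exact_mod_cast h1.card_pos
  have hf2 : (0 : ℝ) < W2.card := by exact_mod_cast h2.card_pos
  have ha1 : ((W1 ∩ W2).card : ℝ) ≤ W1.card := by
    exact_mod_cast Finset.card_le_card Finset.inter_subset_left
  have ha2 : ((W1 ∩ W2).card : ℝ) ≤ W2.card := by
    exact_mod_cast Finset.card_le_card Finset.inter_subset_right
  have hu : ((W1 ∪ W2).card : ℝ) + (W1 ∩ W2).card = W1.card + W2.card := by
    exact_mod_cast Finset.card_union_add_card_inter W1 W2
  have ha0 : (0 : ℝ) ≤ (W1 ∩ W2).card := Nat.cast_nonneg _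
  generalize ((W1 ∩ W2).card : ℝ) = a at *
  generalize ((W1 ∪ W2).card : ℝ) = u at *
  generalize (W1.card : ℝ) = x at *
  generalize (W2.card : ℝ) = y at *
  have hq : 0 < √(x * y) := Real.sqrt_pos.mpr (mul_pos hf1 hf2)
  have haq : a ≤ √(x * y) := Real.le_sqrt_of_sq_le (by nlinarith)
  have hamgm : 2 * √(x * y) ≤ x + y := by
    have h : √(x * y) ≤ (x + y) / 2 :=
      Real.sqrt_le_iff.mpr ⟨by linarith, by nlinarith [sq_nonneg (x - y)]⟩
    linarith
  have hS : a / √(x * y) / (2 - a / √(x * y)) = a / (2 * √(x * y) - a) := by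
    rw [← mul_div_mul_right (a / √(x * y)) _ hq.ne', sub_mul, div_mul_cancel₀ _ hq.ne']
  rw [hS]
  exact div_le_div_of_nonneg_left ha0 (by linarith) (by linarith)
end

section
/- Data-dependent bound: let W1, W2 be nonempty finite sets with cosine similarity S and resemblance R, and let z = √(f2/f1) + √(f1/f2). If z ≤ z* for some real z*, then S/(z* − S) ≤ R ≤ S/(2 − S). -/
/-!
With `x = √f1`, `y = √f2` one has `S = a / (x y)`, hence `S / (t - S) = a / (t x y - a)` for every
`t`, while `R = a / (x² + y² - a)`. The upper bound is then `2 x y ≤ x² + y²`, and the lower bound is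
`x² + y² ≤ z* x y`, which is the hypothesis on `z = y / x + x / y` multiplied by `x y`. The
denominators are positive because `a ≤ min (x², y²) ≤ x y`.
-/

/-- `S / (t - S) = a / (t p - a)` for `S = a / p`. -/
lemma div_div_sub_div (a p t : ℝ) (hp : 0 < p) :
    a / p / (t - a / p) = a / (t * p - a) := by
  have h : t - a / p = (t * p - a) / p := by field_simp
  rw [h, div_div_div_cancel_right₀ hp.ne']

/-- Data-dependent bound: if `z = √(f2/f1) + √(f1/f2) ≤ z*` with `z* ≥ 2`, then
`S/(z* - S) ≤ R ≤ S/(2 - S)`. -/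
theorem minhash_data_dependent_bound (W1 W2 : Finset ℕ) (h1 : W1.Nonempty) (h2 : W2.Nonempty)
    (zstar : ℝ) (hzstar : 2 ≤ zstar)
    (hz : Real.sqrt ((W2.card : ℝ) / (W1.card : ℝ)) +
        Real.sqrt ((W1.card : ℝ) / (W2.card : ℝ)) ≤ zstar) :
    (((W1 ∩ W2).card : ℝ) / Real.sqrt ((W1.card : ℝ) * (W2.card : ℝ))) /
        (zstar - ((W1 ∩ W2).card : ℝ) / Real.sqrt ((W1.card : ℝ) * (W2.card : ℝ))) ≤
      ((W1 ∩ W2).card : ℝ) / ((W1 ∪ W2).card : ℝ) ∧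
    ((W1 ∩ W2).card : ℝ) / ((W1 ∪ W2).card : ℝ) ≤
      (((W1 ∩ W2).card : ℝ) / Real.sqrt ((W1.card : ℝ) * (W2.card : ℝ))) /
        (2 - ((W1 ∩ W2).card : ℝ) / Real.sqrt ((W1.card : ℝ) * (W2.card : ℝ))) := by
  have hf1 : (0 : ℝ) < W1.card := by exact_mod_cast h1.card_pos
  have hf2 : (0 : ℝ) < W2.card := by exact_mod_cast h2.card_pos
  have ha1 : ((W1 ∩ W2).card : ℝ) ≤ W1.card := by
    exact_mod_cast Finset.card_le_card Finset.inter_subset_left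
  have ha2 : ((W1 ∩ W2).card : ℝ) ≤ W2.card := by
    exact_mod_cast Finset.card_le_card Finset.inter_subset_right
  have ha0 : (0 : ℝ) ≤ (W1 ∩ W2).card := Nat.cast_nonneg _
  have hu : ((W1 ∪ W2).card : ℝ) = W1.card + W2.card - (W1 ∩ W2).card := by
    have h : ((W1 ∪ W2).card : ℝ) + (W1 ∩ W2).card = W1.card + W2.card := by
      exact_mod_cast Finset.card_union_add_card_inter W1 W2
    linarith
  rw [hu]
  generalize ((W1 ∩ W2).card : ℝ) = a at *
  rw [Real.sqrt_div hf2.le, Real.sqrt_div hf1.le] at hz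
  rw [Real.sqrt_mul hf1.le]
  have hx := Real.sqrt_pos.2 hf1
  have hy := Real.sqrt_pos.2 hf2
  have hx2 := Real.sq_sqrt hf1.le
  have hy2 := Real.sq_sqrt hf2.le
  generalize √(W1.card : ℝ) = x at *
  generalize √(W2.card : ℝ) = y at *
  rw [← hx2] at ha1 ⊢
  rw [← hy2] at ha2 ⊢
  have hp : 0 < x * y := mul_pos hx hy
  have hap : a ≤ x * y := by
    rcases le_total x y with h | h <;> nlinarith
  have hzp : x ^ 2 + y ^ 2 ≤ zstar * (x * y) := by
    have h : y / x + x / y = (x ^ 2 + y ^ 2) / (x * y) := by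
      field_simp
      ring
    rwa [h, div_le_iff₀ hp] at hz
  have h2p : 2 * (x * y) ≤ x ^ 2 + y ^ 2 := by nlinarith [sq_nonneg (x - y)]
  rw [div_div_sub_div a _ _ hp, div_div_sub_div a _ _ hp]
  constructor
  · exact div_le_div_of_nonneg_left ha0 (by linarith) (by linarith)
  · exact div_le_div_of_nonneg_left ha0 (by linarith) (by linarith)
end

section
/- Achievability of the lower bound: for every pair of natural numbers p, q with 1 ≤ p ≤ q, there exist nonempty finite sets W1, W2 (e.g., with |W1| = q, |W2| = p, and |W1 ∩ W2| = p) whose cosine similarity equals S = √(p/q) and whose resemblance equals R = S² = p/q. -/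
/-- Achievability of the lower bound: for naturals `1 ≤ p ≤ q`, there exist nonempty finite
sets `W1, W2` with `|W1| = q`, `|W2| = p`, `|W1 ∩ W2| = p`, cosine similarity `S = √(p/q)`
and resemblance `R = S² = p/q`. -/
theorem lower_bound_achievable (p q : ℕ) (hp : 1 ≤ p) (hpq : p ≤ q) :
    ∃ W1 W2 : Finset ℕ, W1.Nonempty ∧ W2.Nonempty ∧
      W1.card = q ∧ W2.card = p ∧ (W1 ∩ W2).card = p ∧
      ((W1 ∩ W2).card : ℝ) / Real.sqrt ((W1.card : ℝ) * (W2.card : ℝ)) =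
        Real.sqrt ((p : ℝ) / (q : ℝ)) ∧
      ((W1 ∩ W2).card : ℝ) / ((W1 ∪ W2).card : ℝ) =
        (((W1 ∩ W2).card : ℝ) / Real.sqrt ((W1.card : ℝ) * (W2.card : ℝ))) ^ 2 ∧
      ((W1 ∩ W2).card : ℝ) / ((W1 ∪ W2).card : ℝ) = (p : ℝ) / (q : ℝ) := by
  have hp' : (0 : ℝ) < p := by exact_mod_cast hp
  have hq' : (0 : ℝ) < q := by exact_mod_cast hp.trans hpq
  -- The extremal configuration is a nested pair `W2 ⊆ W1`, realised by initial segments.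
  have hsub : Finset.range p ⊆ Finset.range q := Finset.range_subset_range.2 hpq
  have hS : (p : ℝ) / √((q : ℝ) * p) = √((p : ℝ) / q) := by
    rw [eq_comm, Real.sqrt_eq_iff_eq_sq (by positivity) (by positivity), div_pow,
      Real.sq_sqrt (by positivity)]
    field_simp
  refine ⟨Finset.range q, Finset.range p, Finset.nonempty_range_iff.2 (by omega),
    Finset.nonempty_range_iff.2 (by omega), ?_⟩
  rw [Finset.inter_eq_right.2 hsub, Finset.union_eq_left.2 hsub, Finset.card_range,
    Finset.card_range, hS, Real.sq_sqrt (by positivity)]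
  exact ⟨rfl, rfl, rfl, rfl, rfl, rfl⟩
end

section
/- Tightness of the upper bound: if f : [0,1] → ℝ is a continuous function such that for every pair of nonempty finite sets W1, W2 with cosine similarity S and resemblance R we have R ≤ f(S) ≤ S/(2 − S), then f(c) = c/(2 − c) for every c ∈ [0,1]; in other words, no continuous upper bound on R in terms of S alone can improve on S/(2 − S). -/
/-!
Two sets of equal size `n` with `a` common elements have `S = a / n` and
`R = a / (2 n - a) = S / (2 - S)`, so the hypothesis forces `f q = q / (2 - q)` at every rational
`q` in `[0, 1]`. Both sides are continuous on `[0, 1]`, so the identity extends to real `c` along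
the rational approximations `⌊c n⌋ / n`.
-/

open Filter Topology

/-- Two integer intervals of length `n` overlapping in `a` points attain the bound. -/
lemma exists_pair_attaining {a n : ℕ} (hn : 0 < n) (han : a ≤ n) :
    ∃ W1 W2 : Finset ℕ, W1.Nonempty ∧ W2.Nonempty ∧ W1.card = n ∧ W2.card = n ∧
      (W1 ∩ W2).card = a ∧ (W1 ∪ W2).card = 2 * n - a := by
  have h1 : (Finset.Ico 0 n).card = n := by simp
  have h2 : (Finset.Ico (n - a) (2 * n - a)).card = n := by
    rw [Nat.card_Ico]; omega
  have hi : (Finset.Ico 0 n ∩ Finset.Ico (n - a) (2 * n - a)).card = a := by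
    have : Finset.Ico 0 n ∩ Finset.Ico (n - a) (2 * n - a) = Finset.Ico (n - a) n := by
      ext x; simp only [Finset.mem_inter, Finset.mem_Ico]; omega
    rw [this, Nat.card_Ico]; omega
  have hu := Finset.card_union_add_card_inter (Finset.Ico 0 n) (Finset.Ico (n - a) (2 * n - a))
  refine ⟨Finset.Ico 0 n, Finset.Ico (n - a) (2 * n - a), ?_, ?_, h1, h2, hi, by omega⟩
  · exact Finset.card_pos.mp (by omega)
  · exact Finset.card_pos.mp (by omega)

/-- Tightness of the upper bound: any continuous `f` on `[0,1]` with
`R ≤ f(S) ≤ S/(2-S)` for all pairs of nonempty finite sets must equal `c/(2-c)` on `[0,1]`. -/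
theorem upper_bound_tight (f : ℝ → ℝ) (hf : ContinuousOn f (Set.Icc 0 1))
    (hbound : ∀ W1 W2 : Finset ℕ, W1.Nonempty → W2.Nonempty →
      ((W1 ∩ W2).card : ℝ) / ((W1 ∪ W2).card : ℝ) ≤
          f (((W1 ∩ W2).card : ℝ) / Real.sqrt ((W1.card : ℝ) * (W2.card : ℝ))) ∧
        f (((W1 ∩ W2).card : ℝ) / Real.sqrt ((W1.card : ℝ) * (W2.card : ℝ))) ≤
          (((W1 ∩ W2).card : ℝ) / Real.sqrt ((W1.card : ℝ) * (W2.card : ℝ))) /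
            (2 - ((W1 ∩ W2).card : ℝ) / Real.sqrt ((W1.card : ℝ) * (W2.card : ℝ)))) :
    ∀ c ∈ Set.Icc (0 : ℝ) 1, f c = c / (2 - c) := by
  -- The two bounds coincide at rational points.
  have hrat : ∀ a n : ℕ, 0 < n → a ≤ n →
      f ((a : ℝ) / n) = ((a : ℝ) / n) / (2 - (a : ℝ) / n) := by
    intro a n hn han
    obtain ⟨W1, W2, hW1, hW2, h1, h2, hi, hu⟩ := exists_pair_attaining hn han
    obtain ⟨hl, hr⟩ := hbound W1 W2 hW1 hW2
    have hn' : (0 : ℝ) < n := by exact_mod_cast hn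
    have han' : (a : ℝ) ≤ n := by exact_mod_cast han
    rw [h1, h2, hi, Real.sqrt_mul_self hn'.le] at hl hr
    rw [hu, Nat.cast_sub (by omega)] at hl
    push_cast at hl
    refine le_antisymm hr (le_trans (le_of_eq ?_) hl)
    have h3 : (2 * n - a : ℝ) ≠ 0 := by linarith
    have h4 : (2 - (a : ℝ) / n) = (2 * n - a) / n := by field_simp
    rw [h4]
    field_simp
  rintro c ⟨hc0, hc1⟩
  have hle : ∀ n : ℕ, ⌊c * n⌋₊ ≤ n := fun n =>
    Nat.floor_le_of_le (mul_le_of_le_one_left n.cast_nonneg hc1)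
  have hq : Tendsto (fun n : ℕ => (⌊c * n⌋₊ : ℝ) / n) atTop (𝓝 c) :=
    (tendsto_nat_floor_mul_div_atTop hc0).comp tendsto_natCast_atTop_atTop
  have hqmem : ∀ n : ℕ, (⌊c * n⌋₊ : ℝ) / n ∈ Set.Icc (0 : ℝ) 1 := fun n =>
    ⟨by positivity, div_le_one_of_le₀ (by exact_mod_cast hle n) n.cast_nonneg⟩
  have hlim : Tendsto (fun n : ℕ => f ((⌊c * n⌋₊ : ℝ) / n)) atTop (𝓝 (f c)) :=
    (hf c ⟨hc0, hc1⟩).tendsto.comp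
      (tendsto_nhdsWithin_iff.mpr ⟨hq, Eventually.of_forall hqmem⟩)
  refine tendsto_nhds_unique hlim
    ((hq.div (tendsto_const_nhds.sub hq) (by linarith : (2 : ℝ) - c ≠ 0)).congr' ?_)
  filter_upwards [eventually_gt_atTop 0] with n hn
  exact (hrat _ n hn (hle n)).symm
end

section
/- Tightness of the lower bound: if f : [0,1] → ℝ is a continuous function such that for every pair of nonempty finite sets W1, W2 with cosine similarity S and resemblance R we have S² ≤ f(S) ≤ R, then f(c) = c² for every c ∈ [0,1]; in other words, no continuous lower bound on R in terms of S alone can improve on S². -/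
/-!
For nested sets `W1 ⊆ W2` of sizes `0 < m ≤ n` both `S ^ 2` and `R` equal `m / n`, so the two bounds
force `f (√(m / n)) = m / n`. The points `√(m / n)` are dense in `[0, 1]`: with `m = ⌈c ^ 2 * n⌉₊`
they tend to `c > 0`, and continuity gives `f c = c ^ 2`. For `c = 0` two disjoint sets suffice.
-/

open Filter Topology

/-- Tightness of the lower bound: any continuous `f` on `[0,1]` with
`S² ≤ f(S) ≤ R` for all pairs of nonempty finite sets must equal `c²` on `[0,1]`. -/
theorem lower_bound_tight (f : ℝ → ℝ) (hf : ContinuousOn f (Set.Icc 0 1))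
    (hbound : ∀ W1 W2 : Finset ℕ, W1.Nonempty → W2.Nonempty →
      (((W1 ∩ W2).card : ℝ) / Real.sqrt ((W1.card : ℝ) * (W2.card : ℝ))) ^ 2 ≤
          f (((W1 ∩ W2).card : ℝ) / Real.sqrt ((W1.card : ℝ) * (W2.card : ℝ))) ∧
        f (((W1 ∩ W2).card : ℝ) / Real.sqrt ((W1.card : ℝ) * (W2.card : ℝ))) ≤
          ((W1 ∩ W2).card : ℝ) / ((W1 ∪ W2).card : ℝ)) :
    ∀ c ∈ Set.Icc (0 : ℝ) 1, f c = c ^ 2 := by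
  -- Nested initial segments pin down `f` at every `√(m / n)`.
  have key : ∀ m n : ℕ, 0 < m → m ≤ n → f (√((m : ℝ) / n)) = (m : ℝ) / n := by
    intro m n hm hmn
    have hm' : (0 : ℝ) < m := by exact_mod_cast hm
    have hn' : (0 : ℝ) < n := by exact_mod_cast hm.trans_le hmn
    have hsub : Finset.range m ⊆ Finset.range n := Finset.range_mono hmn
    have h := hbound (Finset.range m) (Finset.range n)
      (Finset.nonempty_range_iff.2 hm.ne') (Finset.nonempty_range_iff.2 (hm.trans_le hmn).ne')
    rw [Finset.inter_eq_left.2 hsub, Finset.union_eq_right.2 hsub, Finset.card_range,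
      Finset.card_range] at h
    have hS : (m : ℝ) / √((m : ℝ) * n) = √((m : ℝ) / n) := by
      rw [Real.sqrt_mul hm'.le, Real.sqrt_div hm'.le, ← div_div, Real.div_sqrt]
    rw [hS, Real.sq_sqrt (by positivity)] at h
    exact le_antisymm h.2 h.1
  intro c hc
  rcases hc.1.eq_or_lt with rfl | hpos
  · have h := hbound {0} {1} (by simp) (by simp)
    norm_num at h
    rw [le_antisymm h.2 h.1]
    norm_num
  · have hlim : Tendsto (fun n : ℕ => (⌈c ^ 2 * (n : ℝ)⌉₊ : ℝ) / n) atTop (𝓝 (c ^ 2)) :=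
      (tendsto_nat_ceil_mul_div_atTop (sq_nonneg c)).comp tendsto_natCast_atTop_atTop
    have hle : ∀ n : ℕ, ⌈c ^ 2 * (n : ℝ)⌉₊ ≤ n := fun n =>
      Nat.ceil_le.2 (mul_le_of_le_one_left n.cast_nonneg (pow_le_one₀ hc.1 hc.2))
    have hsqrt : Tendsto (fun n : ℕ => √((⌈c ^ 2 * (n : ℝ)⌉₊ : ℝ) / n)) atTop
        (𝓝[Set.Icc 0 1] c) := by
      refine tendsto_nhdsWithin_iff.2 ⟨?_, Eventually.of_forall fun n =>
        ⟨Real.sqrt_nonneg _, Real.sqrt_le_one.2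
          (div_le_one_of_le₀ (by exact_mod_cast hle n) n.cast_nonneg)⟩⟩
      have := hlim.sqrt
      rwa [Real.sqrt_sq hc.1] at this
    have hval : ∀ᶠ n : ℕ in atTop, f (√((⌈c ^ 2 * (n : ℝ)⌉₊ : ℝ) / n)) =
        (⌈c ^ 2 * (n : ℝ)⌉₊ : ℝ) / n := by
      filter_upwards [eventually_gt_atTop 0] with n hn
      have hn' : (0 : ℝ) < n := by exact_mod_cast hn
      exact key _ n (Nat.ceil_pos.2 (by positivity)) (hle n)
    exact tendsto_nhds_unique (((hf c hc).tendsto.comp hsqrt).congr' hval) hlim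
end

section
/- MinHash collision probability: let W1, W2 be nonempty subsets of the finite linearly ordered set Ω = {1, 2, ..., D}, and let π be a permutation of Ω chosen uniformly at random. Then the probability that min(π(W1)) = min(π(W2)) equals the resemblance R = |W1 ∩ W2| / |W1 ∪ W2|. -/
/-!
Put `U = W1 ∪ W2`. The element of `U` at which `π` is smallest is uniformly distributed on `U`:
composing `π` with the transposition of `x, y ∈ U` permutes `U`, hence exchanges the permutations
minimized at `x` with those minimized at `y` (`card_minimizedAt_eq`). The minima of `π` over `W1`
and `W2` agree exactly when this minimizer lies in `W1 ∩ W2` (`min'_image_eq_iff`), so the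
probability is `|W1 ∩ W2| / |U|`.
-/

/-- The permutations `π` whose values on `U` are bounded below by `π x`; for `x ∈ U`, those that
attain their minimum over `U` at `x`. -/
def minimizedAt {D : ℕ} (U : Finset (Fin D)) (x : Fin D) : Finset (Equiv.Perm (Fin D)) :=
  Finset.univ.filter fun π => ∀ y ∈ U, π x ≤ π y

lemma mem_minimizedAt {D : ℕ} {U : Finset (Fin D)} {x : Fin D} {π : Equiv.Perm (Fin D)} :
    π ∈ minimizedAt U x ↔ ∀ y ∈ U, π x ≤ π y := by
  simp [minimizedAt]

lemma swap_mem {D : ℕ} {U : Finset (Fin D)} {x y z : Fin D} (hx : x ∈ U) (hy : y ∈ U)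
    (hz : z ∈ U) : Equiv.swap x y z ∈ U := by
  rw [Equiv.swap_apply_def]
  split_ifs <;> assumption

lemma card_minimizedAt_le {D : ℕ} {U : Finset (Fin D)} {x y : Fin D} (hx : x ∈ U) (hy : y ∈ U) :
    (minimizedAt U x).card ≤ (minimizedAt U y).card := by
  refine Finset.card_le_card_of_injOn (fun π => π * Equiv.swap x y) ?_
    (fun _ _ _ _ h => mul_right_cancel h)
  intro π hπ
  have hπ' := mem_minimizedAt.1 (Finset.mem_coe.1 hπ)
  refine Finset.mem_coe.2 (mem_minimizedAt.2 fun z hz => ?_)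
  simpa using hπ' _ (swap_mem hx hy hz)

lemma card_minimizedAt_eq {D : ℕ} {U : Finset (Fin D)} {x y : Fin D} (hx : x ∈ U) (hy : y ∈ U) :
    (minimizedAt U x).card = (minimizedAt U y).card :=
  (card_minimizedAt_le hx hy).antisymm (card_minimizedAt_le hy hx)

/-- The minimizer over `U` is unique, so the sets `minimizedAt U x` for `x ∈ S` are disjoint, and
they all have the same size. -/
lemma card_biUnion_minimizedAt {D : ℕ} {U S : Finset (Fin D)} (hS : S ⊆ U) {u : Fin D}
    (hu : u ∈ U) :
    (S.biUnion (minimizedAt U)).card = S.card * (minimizedAt U u).card := by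
  rw [Finset.card_biUnion, Finset.sum_congr rfl fun x hx => card_minimizedAt_eq (hS hx) hu,
    Finset.sum_const, smul_eq_mul]
  intro x hx y hy hxy
  refine Finset.disjoint_left.2 fun π h h' => hxy (π.injective ?_)
  exact (mem_minimizedAt.1 h y (hS hy)).antisymm (mem_minimizedAt.1 h' x (hS hx))

lemma biUnion_minimizedAt_self {D : ℕ} {U : Finset (Fin D)} (hU : U.Nonempty) :
    U.biUnion (minimizedAt U) = Finset.univ := by
  refine Finset.eq_univ_of_forall fun π => ?_
  obtain ⟨x, hx, h⟩ := Finset.exists_min_image U π hU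
  exact Finset.mem_biUnion.2 ⟨x, hx, mem_minimizedAt.2 h⟩

lemma min'_image_eq_iff {D : ℕ} {W1 W2 : Finset (Fin D)} (h1 : W1.Nonempty) (h2 : W2.Nonempty)
    (π : Equiv.Perm (Fin D)) :
    (W1.image π).min' (h1.image π) = (W2.image π).min' (h2.image π) ↔
      π ∈ (W1 ∩ W2).biUnion (minimizedAt (W1 ∪ W2)) := by
  simp only [Finset.mem_biUnion, mem_minimizedAt, Finset.mem_inter, Finset.mem_union]
  constructor
  · intro h
    obtain ⟨x, hx, hx'⟩ := Finset.mem_image.1 ((W1.image π).min'_mem (h1.image π))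
    obtain ⟨y, hy, hy'⟩ := Finset.mem_image.1 ((W2.image π).min'_mem (h2.image π))
    -- Equal minimum values have equal preimages, which gives a common minimizer.
    obtain rfl : x = y := π.injective (by rw [hx', hy', h])
    refine ⟨x, ⟨hx, hy⟩, ?_⟩
    rintro z (hz | hz)
    · exact hx' ▸ Finset.min'_le _ _ (Finset.mem_image_of_mem π hz)
    · exact hy' ▸ Finset.min'_le _ _ (Finset.mem_image_of_mem π hz)
  · rintro ⟨x, ⟨hx1, hx2⟩, h⟩
    have key : ∀ (W : Finset (Fin D)) (hW : W.Nonempty), x ∈ W → (∀ z ∈ W, π x ≤ π z) →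
        (W.image π).min' (hW.image π) = π x := by
      intro W hW hx hz
      refine (Finset.min'_le _ _ (Finset.mem_image_of_mem π hx)).antisymm ?_
      refine Finset.le_min' _ _ _ fun w hw => ?_
      obtain ⟨z, hzW, rfl⟩ := Finset.mem_image.1 hw
      exact hz z hzW
    rw [key W1 h1 hx1 fun z hz => h z (Or.inl hz), key W2 h2 hx2 fun z hz => h z (Or.inr hz)]

/-- MinHash collision probability: for nonempty `W1, W2 ⊆ Fin D` and a uniformly random
permutation `π` of `Fin D`, the probability that `min (π '' W1) = min (π '' W2)` equals the
resemblance `|W1 ∩ W2| / |W1 ∪ W2|`. -/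
theorem minhash_collision_probability (D : ℕ) (W1 W2 : Finset (Fin D))
    (h1 : W1.Nonempty) (h2 : W2.Nonempty) :
    ((Finset.univ.filter (fun π : Equiv.Perm (Fin D) =>
        (W1.image π).min' (h1.image π) = (W2.image π).min' (h2.image π))).card : ℝ) /
      (Fintype.card (Equiv.Perm (Fin D)) : ℝ) =
    ((W1 ∩ W2).card : ℝ) / ((W1 ∪ W2).card : ℝ) := by
  obtain ⟨u, hu⟩ := h1.mono (Finset.subset_union_left (s₂ := W2))
  have hevent : (Finset.univ.filter (fun π : Equiv.Perm (Fin D) =>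
      (W1.image π).min' (h1.image π) = (W2.image π).min' (h2.image π))) =
      (W1 ∩ W2).biUnion (minimizedAt (W1 ∪ W2)) := by
    ext π
    rw [Finset.mem_filter, min'_image_eq_iff h1 h2]
    simp only [Finset.mem_univ, true_and]
  have htotal : Fintype.card (Equiv.Perm (Fin D)) =
      (W1 ∪ W2).card * (minimizedAt (W1 ∪ W2) u).card := by
    rw [← card_biUnion_minimizedAt subset_rfl hu, biUnion_minimizedAt_self ⟨u, hu⟩,
      Finset.card_univ]
  have hc : ((minimizedAt (W1 ∪ W2) u).card : ℝ) ≠ 0 := by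
    intro h0
    rw [Nat.cast_eq_zero.1 h0, mul_zero] at htotal
    exact Fintype.card_ne_zero htotal
  rw [hevent, htotal, card_biUnion_minimizedAt
    (Finset.inter_subset_left.trans Finset.subset_union_left) hu]
  push_cast
  exact mul_div_mul_right _ _ hc
end

section
/- MinHash is an LSH for cosine similarity: for binary data (nonempty finite sets), for any S0 ∈ (0,1] and c ∈ (0,1), MinHash satisfies both LSH conditions simultaneously: for any pair of nonempty sets W1, W2, if their cosine similarity S satisfies S ≥ S0 then the collision probability R ≥ S0², and if S ≤ cS0 then R ≤ cS0/(2 − cS0); moreover S0² > cS0/(2 − cS0) whenever S0(2 − cS0) > c. -/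
/-!
Write `a = |W1 ∩ W2|`, `f1 = |W1|`, `f2 = |W2|`, so that `|W1 ∪ W2| = f1 + f2 - a`. Everything
follows from the two-sided comparison `S² ≤ R ≤ S / (2 - S)`. The lower bound is
`a (f1 + f2 - a) ≤ f1 f2`, which is `(f1 - a) (f2 - a) ≥ 0`; the upper bound is the AM-GM
inequality `√(f1 f2) ≤ (f1 + f2) / 2`. The final gap `c S0 / (2 - c S0) < S0²` is the
hypothesis `c < S0 (2 - c S0)` multiplied by `S0`.
-/

/-- MinHash is an LSH for cosine similarity: for any `S0 ∈ (0,1]` and `c ∈ (0,1)`, for every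
pair of nonempty sets, `S ≥ S0` implies the collision probability `R ≥ S0²` and `S ≤ c·S0`
implies `R ≤ c·S0/(2 - c·S0)`; moreover `S0² > c·S0/(2 - c·S0)` whenever `S0(2 - c·S0) > c`. -/
theorem minhash_is_lsh_for_cosine (D : ℕ) (S0 c : ℝ)
    (hS0 : 0 < S0) (hS0' : S0 ≤ 1) (hc : 0 < c) (hc' : c < 1) :
    (∀ W1 W2 : Finset (Fin D), W1.Nonempty → W2.Nonempty →
      ((S0 ≤ ((W1 ∩ W2).card : ℝ) / Real.sqrt ((W1.card : ℝ) * (W2.card : ℝ)) →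
          S0 ^ 2 ≤ ((W1 ∩ W2).card : ℝ) / ((W1 ∪ W2).card : ℝ)) ∧
        (((W1 ∩ W2).card : ℝ) / Real.sqrt ((W1.card : ℝ) * (W2.card : ℝ)) ≤ c * S0 →
          ((W1 ∩ W2).card : ℝ) / ((W1 ∪ W2).card : ℝ) ≤ c * S0 / (2 - c * S0)))) ∧
    (S0 * (2 - c * S0) > c → c * S0 / (2 - c * S0) < S0 ^ 2) := by
  have ht : c * S0 < 1 := by nlinarith
  have h2t : 0 < 2 - c * S0 := by linarith
  refine ⟨fun W1 W2 h1 h2 => ?_, fun h => ?_⟩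
  · have hf1 : (0 : ℝ) < W1.card := by exact_mod_cast h1.card_pos
    have hf2 : (0 : ℝ) < W2.card := by exact_mod_cast h2.card_pos
    have ha1 : ((W1 ∩ W2).card : ℝ) ≤ W1.card := by
      exact_mod_cast Finset.card_le_card Finset.inter_subset_left
    have ha2 : ((W1 ∩ W2).card : ℝ) ≤ W2.card := by
      exact_mod_cast Finset.card_le_card Finset.inter_subset_right
    have hu : ((W1 ∪ W2).card : ℝ) = W1.card + W2.card - (W1 ∩ W2).card := by
      have := Finset.card_union_add_card_inter W1 W2
      rw [eq_sub_iff_add_eq]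
      exact_mod_cast this
    have ha : (0 : ℝ) ≤ (W1 ∩ W2).card := Nat.cast_nonneg _
    rw [hu]
    generalize ((W1 ∩ W2).card : ℝ) = a at *
    generalize (W1.card : ℝ) = f1 at *
    generalize (W2.card : ℝ) = f2 at *
    have hU : 0 < f1 + f2 - a := by linarith
    have hs : 0 < √(f1 * f2) := Real.sqrt_pos.2 (mul_pos hf1 hf2)
    have hsq : √(f1 * f2) ^ 2 = f1 * f2 := Real.sq_sqrt (mul_pos hf1 hf2).le
    refine ⟨fun h => ?_, fun h => ?_⟩
    · calc S0 ^ 2 ≤ (a / √(f1 * f2)) ^ 2 := by gcongr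
        _ = a ^ 2 / (f1 * f2) := by rw [div_pow, hsq]
        _ ≤ a / (f1 + f2 - a) := by
          rw [div_le_div_iff₀ (mul_pos hf1 hf2) hU]
          -- `a` times the inequality `(f1 - a) (f2 - a) ≥ 0`
          nlinarith [mul_nonneg ha (mul_nonneg (sub_nonneg.2 ha1) (sub_nonneg.2 ha2))]
    · rw [div_le_iff₀ hs] at h
      have amgm : √(f1 * f2) ≤ (f1 + f2) / 2 := by
        apply Real.sqrt_le_iff.2
        constructor
        · linarith
        · nlinarith [sq_nonneg (f1 - f2)]
      rw [div_le_div_iff₀ hU h2t]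
      -- after clearing denominators the goal is `2 a ≤ c S0 (f1 + f2)`
      nlinarith [mul_le_mul_of_nonneg_left amgm (mul_pos hc hS0).le]
  · rw [div_lt_iff₀ h2t]
    nlinarith [mul_lt_mul_of_pos_left h hS0]
end

section
/- 1-bit MinHash bounds for cosine similarity: let W1, W2 be nonempty finite sets with cosine similarity S and resemblance R, and set the 1-bit collision value P = (R + 1)/2. Then (S² + 1)/2 ≤ P ≤ 1/(2 − S). Consequently, for S0 ∈ (0,1] and c ∈ (0,1): if S ≥ S0 then P ≥ (S0² + 1)/2, and if S ≤ cS0 then P ≤ 1/(2 − cS0). -/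
/-!
Write `a = |W1 ∩ W2|`, `u = |W1 ∪ W2| = f1 + f2 - a` and `g = √(f1 f2)`, so that `S = a / g` and
`R = a / u`. The bound `S² ≤ R` amounts to `a u ≤ f1 f2`, i.e. `0 ≤ (f1 - a) (f2 - a)`.
The bound `(R + 1) / 2 ≤ 1 / (2 - S)` amounts to `a (2 g - a - u) ≤ 0`, which is the AM-GM
inequality `2 g ≤ f1 + f2`. The threshold versions follow by monotonicity of `S ↦ S²` and
`S ↦ 1 / (2 - S)`.
-/

/-- The lower bound `S² ≤ R`, in terms of the cardinalities. -/
lemma cosine_sq_le_resemblance {a x y u : ℝ} (ha : 0 ≤ a) (hax : a ≤ x) (hay : a ≤ y)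
    (hx : 0 < x) (hy : 0 < y) (hu : 0 < u) (hua : u + a = x + y) :
    (a / √(x * y)) ^ 2 ≤ a / u := by
  rw [div_pow, Real.sq_sqrt (by positivity), div_le_div_iff₀ (by positivity) hu]
  have key : a * u ≤ x * y := by
    obtain rfl : u = x + y - a := by linarith
    nlinarith [mul_nonneg (sub_nonneg.2 hax) (sub_nonneg.2 hay)]
  nlinarith [mul_le_mul_of_nonneg_left key ha]

/-- The upper bound on the 1-bit collision value, in terms of the cardinalities. The bound
`S ≤ 1` ensures that the denominator `2 - S` is positive. -/
lemma collision_le {a x y u : ℝ} (ha : 0 ≤ a) (hx : 0 < x) (hy : 0 < y) (hu : 0 < u)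
    (hua : u + a = x + y) (hS : a / √(x * y) ≤ 1) :
    (a / u + 1) / 2 ≤ 1 / (2 - a / √(x * y)) := by
  have hg : 0 < √(x * y) := Real.sqrt_pos.2 (by positivity)
  have hgg : √(x * y) ^ 2 = x * y := Real.sq_sqrt (by positivity)
  have hamgm : 2 * √(x * y) ≤ x + y :=
    abs_le_of_sq_le_sq' (by nlinarith [sq_nonneg (x - y)]) (by positivity) |>.2
  generalize √(x * y) = g at *
  have hag : a ≤ g := (div_le_one hg).1 hS
  have e1 : (a / u + 1) / 2 = (a + u) / (2 * u) := by field_simp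
  have e2 : 1 / (2 - a / g) = g / (2 * g - a) := by
    have : 2 * g - a ≠ 0 := by linarith
    have : 2 - a / g ≠ 0 := by linarith
    field_simp
  rw [e1, e2, div_le_div_iff₀ (by positivity) (by linarith)]
  nlinarith [mul_nonneg ha (show 0 ≤ u + a - 2 * g by linarith)]

/-- 1-bit MinHash bounds for cosine similarity: with `P = (R + 1)/2`, we have
`(S² + 1)/2 ≤ P ≤ 1/(2 - S)`; consequently `S ≥ S0` implies `P ≥ (S0² + 1)/2` and
`S ≤ c·S0` implies `P ≤ 1/(2 - c·S0)`. -/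
theorem one_bit_minhash_bounds (W1 W2 : Finset ℕ) (h1 : W1.Nonempty) (h2 : W2.Nonempty)
    (S0 c : ℝ) (hS0 : 0 < S0) (hS0' : S0 ≤ 1) (hc : 0 < c) (hc' : c < 1) :
    ((((W1 ∩ W2).card : ℝ) / Real.sqrt ((W1.card : ℝ) * (W2.card : ℝ))) ^ 2 + 1) / 2 ≤
        (((W1 ∩ W2).card : ℝ) / ((W1 ∪ W2).card : ℝ) + 1) / 2 ∧
      (((W1 ∩ W2).card : ℝ) / ((W1 ∪ W2).card : ℝ) + 1) / 2 ≤
        1 / (2 - ((W1 ∩ W2).card : ℝ) / Real.sqrt ((W1.card : ℝ) * (W2.card : ℝ))) ∧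
      (S0 ≤ ((W1 ∩ W2).card : ℝ) / Real.sqrt ((W1.card : ℝ) * (W2.card : ℝ)) →
        (S0 ^ 2 + 1) / 2 ≤ (((W1 ∩ W2).card : ℝ) / ((W1 ∪ W2).card : ℝ) + 1) / 2) ∧
      (((W1 ∩ W2).card : ℝ) / Real.sqrt ((W1.card : ℝ) * (W2.card : ℝ)) ≤ c * S0 →
        (((W1 ∩ W2).card : ℝ) / ((W1 ∪ W2).card : ℝ) + 1) / 2 ≤ 1 / (2 - c * S0)) := by
  have hx : (0 : ℝ) < W1.card := by exact_mod_cast h1.card_pos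
  have hy : (0 : ℝ) < W2.card := by exact_mod_cast h2.card_pos
  have hu : (0 : ℝ) < (W1 ∪ W2).card := by exact_mod_cast (h1.mono Finset.subset_union_left).card_pos
  have ha : (0 : ℝ) ≤ (W1 ∩ W2).card := by positivity
  have hax : ((W1 ∩ W2).card : ℝ) ≤ W1.card := by
    exact_mod_cast Finset.card_le_card Finset.inter_subset_left
  have hay : ((W1 ∩ W2).card : ℝ) ≤ W2.card := by
    exact_mod_cast Finset.card_le_card Finset.inter_subset_right
  have hua : ((W1 ∪ W2).card : ℝ) + (W1 ∩ W2).card = W1.card + W2.card := by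
    exact_mod_cast Finset.card_union_add_card_inter W1 W2
  have hS : ((W1 ∩ W2).card : ℝ) / √((W1.card : ℝ) * W2.card) ≤ 1 := by
    refine div_le_one_of_le₀ (Real.le_sqrt_of_sq_le ?_) (Real.sqrt_nonneg _)
    rw [sq]
    gcongr
  have hlow := cosine_sq_le_resemblance ha hax hay hx hy hu hua
  have hup := collision_le ha hx hy hu hua hS
  refine ⟨by linarith, hup, fun h => ?_, fun h => hup.trans ?_⟩
  · have := pow_le_pow_left₀ hS0.le h 2
    linarith
  · have : c * S0 < 2 := by nlinarith
    exact one_div_le_one_div_of_le (by linarith) (by linarith)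
end

section
/- Restricted-data MinHash bounds: let W1, W2 be nonempty finite sets with cosine similarity S and resemblance R, and suppose the data satisfy z ≤ z* where z = √(|W2|/|W1|) + √(|W1|/|W2|) and z* ≥ 2. Then for S0 ∈ (0,1] and c ∈ (0,1): if S ≥ S0 then R ≥ S0/(z* − S0), and if S ≤ cS0 then R ≤ cS0/(2 − cS0). -/
/-!
Put `p = √|W1|`, `q = √|W2|`, `a = |W1 ∩ W2|`. Inclusion–exclusion gives
`|W1 ∪ W2| = p² + q² - a`, and `S = a / (p q)`, `z = (p² + q²) / (p q)`. After clearing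
denominators the first bound is `S0 (p² + q²) ≤ a z*`, which follows from
`p² + q² ≤ z* p q` and `S0 p q ≤ a`; with `t = c S0` the second is `2 a ≤ t (p² + q²)`, which
follows from `a ≤ t p q` and `2 p q ≤ p² + q²`.
-/

/-- Restricted-data MinHash bounds: if `z = √(f2/f1) + √(f1/f2) ≤ z*` with `z* ≥ 2`, then
`S ≥ S0` implies `R ≥ S0/(z* - S0)` and `S ≤ c·S0` implies `R ≤ c·S0/(2 - c·S0)`. -/
theorem restricted_minhash_bounds (W1 W2 : Finset ℕ) (h1 : W1.Nonempty) (h2 : W2.Nonempty)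
    (zstar : ℝ) (hzstar : 2 ≤ zstar)
    (hz : Real.sqrt ((W2.card : ℝ) / (W1.card : ℝ)) +
        Real.sqrt ((W1.card : ℝ) / (W2.card : ℝ)) ≤ zstar)
    (S0 c : ℝ) (hS0 : 0 < S0) (hS0' : S0 ≤ 1) (hc : 0 < c) (hc' : c < 1) :
    (S0 ≤ ((W1 ∩ W2).card : ℝ) / Real.sqrt ((W1.card : ℝ) * (W2.card : ℝ)) →
        S0 / (zstar - S0) ≤ ((W1 ∩ W2).card : ℝ) / ((W1 ∪ W2).card : ℝ)) ∧
      (((W1 ∩ W2).card : ℝ) / Real.sqrt ((W1.card : ℝ) * (W2.card : ℝ)) ≤ c * S0 →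
        ((W1 ∩ W2).card : ℝ) / ((W1 ∪ W2).card : ℝ) ≤ c * S0 / (2 - c * S0)) := by
  have hf1 : (0 : ℝ) < W1.card := by exact_mod_cast h1.card_pos
  have hf2 : (0 : ℝ) < W2.card := by exact_mod_cast h2.card_pos
  have hU : (0 : ℝ) < (W1 ∪ W2).card := by
    exact_mod_cast (h1.mono Finset.subset_union_left).card_pos
  have hUI : ((W1 ∪ W2).card : ℝ) + (W1 ∩ W2).card = W1.card + W2.card := by
    exact_mod_cast Finset.card_union_add_card_inter W1 W2
  rw [Real.sqrt_div hf2.le, Real.sqrt_div hf1.le] at hz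
  rw [Real.sqrt_mul hf1.le]
  have hp := Real.sqrt_pos.2 hf1
  have hq := Real.sqrt_pos.2 hf2
  have hp2 := Real.sq_sqrt hf1.le
  have hq2 := Real.sq_sqrt hf2.le
  set p := Real.sqrt (W1.card : ℝ)
  set q := Real.sqrt (W2.card : ℝ)
  have hpq : 0 < p * q := mul_pos hp hq
  have hz' : p ^ 2 + q ^ 2 ≤ zstar * (p * q) := by
    have he : q / p + p / q = (p ^ 2 + q ^ 2) / (p * q) := by
      field_simp
      ring
    rwa [he, div_le_iff₀ hpq] at hz
  have ht : 0 < c * S0 := mul_pos hc hS0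
  have ht1 : c * S0 < 1 := by nlinarith
  constructor
  · intro h
    rw [le_div_iff₀ hpq] at h
    rw [div_le_div_iff₀ (by linarith) hU]
    have e1 := mul_le_mul_of_nonneg_left hz' hS0.le
    have e2 := mul_le_mul_of_nonneg_left h (by linarith : 0 ≤ zstar)
    have hUeq : ((W1 ∪ W2).card : ℝ) = p ^ 2 + q ^ 2 - (W1 ∩ W2).card := by linarith
    rw [hUeq]
    linarith
  · intro h
    rw [div_le_iff₀ hpq] at h
    rw [div_le_div_iff₀ hU (by linarith)]
    -- AM-GM, i.e. `z ≥ 2`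
    have e1 := mul_nonneg ht.le (sq_nonneg (p - q))
    have hUeq : ((W1 ∪ W2).card : ℝ) = p ^ 2 + q ^ 2 - (W1 ∩ W2).card := by linarith
    rw [hUeq]
    linarith
end

section
/- Restricted-data 1-bit MinHash bounds: let W1, W2 be nonempty finite sets with cosine similarity S and resemblance R, suppose z ≤ z* where z = √(|W2|/|W1|) + √(|W1|/|W2|) and z* ≥ 2, and set P = (R + 1)/2. Then for S0 ∈ (0,1] and c ∈ (0,1): if S ≥ S0 then P ≥ z*/(2(z* − S0)), and if S ≤ cS0 then P ≤ 1/(2 − cS0). -/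
/-! Write `p = √|W1|`, `q = √|W2|`, `a = |W1 ∩ W2|` and `s = p² + q²`. Inclusion–exclusion gives
`|W1 ∪ W2| = s - a`, so `P = s / (2 (s - a))`, while `S = a / (p q)` and `z = s / (p q)`. After
clearing denominators the lower bound becomes `S0 * s ≤ zstar * a`, which follows from
`s ≤ zstar * p q` and `S0 * p q ≤ a`; the upper bound becomes `2 a ≤ c S0 * s`, which follows from
`a ≤ c S0 * p q` and `2 p q ≤ s`. -/

/-- Restricted-data 1-bit MinHash bounds: if `z = √(f2/f1) + √(f1/f2) ≤ z*` with `z* ≥ 2`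
and `P = (R + 1)/2`, then `S ≥ S0` implies `P ≥ z*/(2(z* - S0))` and `S ≤ c·S0` implies
`P ≤ 1/(2 - c·S0)`. -/
theorem restricted_one_bit_minhash_bounds (W1 W2 : Finset ℕ)
    (h1 : W1.Nonempty) (h2 : W2.Nonempty)
    (zstar : ℝ) (hzstar : 2 ≤ zstar)
    (hz : Real.sqrt ((W2.card : ℝ) / (W1.card : ℝ)) +
        Real.sqrt ((W1.card : ℝ) / (W2.card : ℝ)) ≤ zstar)
    (S0 c : ℝ) (hS0 : 0 < S0) (hS0' : S0 ≤ 1) (hc : 0 < c) (hc' : c < 1) :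
    (S0 ≤ ((W1 ∩ W2).card : ℝ) / Real.sqrt ((W1.card : ℝ) * (W2.card : ℝ)) →
        zstar / (2 * (zstar - S0)) ≤
          (((W1 ∩ W2).card : ℝ) / ((W1 ∪ W2).card : ℝ) + 1) / 2) ∧
      (((W1 ∩ W2).card : ℝ) / Real.sqrt ((W1.card : ℝ) * (W2.card : ℝ)) ≤ c * S0 →
        (((W1 ∩ W2).card : ℝ) / ((W1 ∪ W2).card : ℝ) + 1) / 2 ≤ 1 / (2 - c * S0)) := by
  have hf1 : (0 : ℝ) < W1.card := by exact_mod_cast h1.card_pos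
  have hf2 : (0 : ℝ) < W2.card := by exact_mod_cast h2.card_pos
  have hu : (0 : ℝ) < (W1 ∪ W2).card := by
    exact_mod_cast (h1.mono Finset.subset_union_left).card_pos
  have huv : ((W1 ∪ W2).card : ℝ) + (W1 ∩ W2).card = W1.card + W2.card := by
    exact_mod_cast Finset.card_union_add_card_inter W1 W2
  rw [Real.sqrt_div hf2.le, Real.sqrt_div hf1.le] at hz
  rw [Real.sqrt_mul hf1.le]
  have hp := Real.sqrt_pos.2 hf1
  have hq := Real.sqrt_pos.2 hf2
  have hp2 := Real.sq_sqrt hf1.le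
  have hq2 := Real.sq_sqrt hf2.le
  generalize Real.sqrt (W1.card : ℝ) = p at *
  generalize Real.sqrt (W2.card : ℝ) = q at *
  generalize ((W1 ∩ W2).card : ℝ) = a at *
  generalize ((W1 ∪ W2).card : ℝ) = u at *
  rw [← hp2, ← hq2] at huv
  have hpq : 0 < p * q := mul_pos hp hq
  have hP : (a / u + 1) / 2 = (p ^ 2 + q ^ 2) / (2 * u) := by
    rw [← huv]
    field_simp
    ring
  have hzs : p ^ 2 + q ^ 2 ≤ zstar * (p * q) := by
    have h : q / p + p / q = (p ^ 2 + q ^ 2) / (p * q) := by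
      field_simp
      ring
    rwa [h, div_le_iff₀ hpq] at hz
  rw [hP]
  constructor
  · intro hS
    rw [le_div_iff₀ hpq] at hS
    rw [div_le_div_iff₀ (by linarith) (by linarith)]
    have h3 : S0 * (p ^ 2 + q ^ 2) ≤ S0 * (zstar * (p * q)) := by gcongr
    have h4 : zstar * (S0 * (p * q)) ≤ zstar * a := by gcongr
    have h5 : u = p ^ 2 + q ^ 2 - a := by linarith
    subst h5
    linarith
  · intro hS
    rw [div_le_iff₀ hpq] at hS
    have ht : 0 < c * S0 := mul_pos hc hS0
    have ht1 : c * S0 < 2 := by nlinarith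
    rw [div_le_div_iff₀ (by linarith) (by linarith)]
    have h3 : c * S0 * (2 * (p * q)) ≤ c * S0 * (p ^ 2 + q ^ 2) := by
      gcongr
      linarith [two_mul_le_add_sq p q]
    have h5 : u = p ^ 2 + q ^ 2 - a := by linarith
    subst h5
    linarith
end

section
/- The MinHash-for-cosine gap exponent is strictly less than 1 when p1 > p2: for S0 ∈ (0,1) and c ∈ (0,1) satisfying S0(2 − cS0) > c, one has 0 < cS0/(2 − cS0) < S0² < 1, and consequently ρ = log(S0²) / log(cS0/(2 − cS0)) satisfies 0 < ρ < 1. -/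
/-- The MinHash-for-cosine gap exponent is strictly less than 1 when `p1 > p2`: for
`S0 ∈ (0,1)` and `c ∈ (0,1)` with `S0(2 - c·S0) > c`, we have
`0 < cS0/(2 - cS0) < S0² < 1` and `ρ = log(S0²)/log(cS0/(2 - cS0)) ∈ (0,1)`. -/
theorem minhash_rho_lt_one (S0 c : ℝ) (hS0 : 0 < S0) (hS0' : S0 < 1)
    (hc : 0 < c) (hc' : c < 1) (hgap : S0 * (2 - c * S0) > c) :
    (0 < c * S0 / (2 - c * S0) ∧ c * S0 / (2 - c * S0) < S0 ^ 2 ∧ S0 ^ 2 < 1) ∧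
      0 < Real.log (S0 ^ 2) / Real.log (c * S0 / (2 - c * S0)) ∧
      Real.log (S0 ^ 2) / Real.log (c * S0 / (2 - c * S0)) < 1 := by
  have hden : 0 < 2 - c * S0 := by nlinarith
  have hp2 : 0 < c * S0 / (2 - c * S0) := by positivity
  -- Multiplying the gap hypothesis by `S0 > 0` gives `c * S0 < S0 ^ 2 * (2 - c * S0)`.
  have hlt : c * S0 / (2 - c * S0) < S0 ^ 2 := by
    rw [div_lt_iff₀ hden]
    nlinarith [mul_lt_mul_of_pos_left hgap hS0]
  have hp1 : S0 ^ 2 < 1 := by nlinarith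
  have hlog1 : Real.log (S0 ^ 2) < 0 := Real.log_neg (by positivity) hp1
  have hlog : Real.log (c * S0 / (2 - c * S0)) < Real.log (S0 ^ 2) := Real.log_lt_log hp2 hlt
  -- Both logarithms are negative, so the denominator is the larger one in absolute value.
  have hlog2 := hlog.trans hlog1
  exact ⟨⟨hp2, hlt, hp1⟩, div_pos_of_neg_of_neg hlog1 hlog2, (div_lt_one_of_neg hlog2).2 hlog⟩
end
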